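/- For every alphabet Σ of size σ ≥ 2, every n ∈ ℕ, and every real t with 0 < t ≤ 0.1·ln σ, if S ∈ Σⁿ is chosen uniformly at random, then E[n − L(S)] ≤ (C(t) − 1)/t, where C(t) = (σ³ − σ²e^{2t})/(σ³ − 2σ²e^{2t} + e^{4t}). -/

import Mathlib

/-!
If `S` is bordered, its shortest border `u` is unbordered and occupies at most half of `S`, so
`S = u v u`; as `L(v) ≤ L(S)`, this gives `n - L(S) ≤ 2 |u| + (|v| - L(v))`. If `S` is unbordered,
then `n - L(S) = 0`. Hence, with `x = exp (2 t)`, `u_k` the number of unbordered words of length `k`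
and `A_n = ∑_S exp (t (n - L(S)))`, one has the renewal inequality
`A_n ≤ σ ^ n + ∑_{1 ≤ k ≤ n/2} u_k x ^ k A_{n - 2k}`.

An unbordered word of length `k ≥ 2` has different first and last letters, so
`u_k ≤ σ ^ k - σ ^ (k - 1)`, and `u_1 ≤ σ`. The weights `u_k x ^ k / σ ^ (2k)` therefore sum to at
most `G = x (σ² - x) / (σ² (σ - x))`, and if `G < 1` then `A_n ≤ σ ^ n / (1 - G) = C(t) σ ^ n` by
induction. Finally `1 + y ≤ exp y` passes from the moment generating function to the expectation.
-/

open Finset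

/-- `S` has a border of length `ℓ`: `1 ≤ ℓ ≤ |S|` and the length-`ℓ` prefix of `S`
equals its length-`ℓ` suffix. -/
def HasBorder {α : Type*} (S : List α) (ℓ : ℕ) : Prop :=
  1 ≤ ℓ ∧ ℓ ≤ S.length ∧ S.take ℓ = S.drop (S.length - ℓ)

/-- A string is unbordered if it has no proper border (no border of length `< |S|`). -/
def Unbordered {α : Type*} (S : List α) : Prop :=
  ∀ ℓ, ℓ < S.length → ¬ HasBorder S ℓ

/-- `maxUnb S` is `L(S)`: the maximum length of (nonempty) unbordered factors of `S`. -/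
noncomputable def maxUnb {α : Type*} (S : List α) : ℕ :=
  sSup {k | ∃ T, T ≠ [] ∧ T <:+: S ∧ Unbordered T ∧ T.length = k}

/-- `p > 0` is a period of `T` if `T[i] = T[i+p]` whenever both indices are valid. -/
def IsPeriod {α : Type*} (T : List α) (p : ℕ) : Prop :=
  0 < p ∧ ∀ (i : ℕ) (h : i + p < T.length),
    T[i]'(Nat.lt_of_le_of_lt (Nat.le_add_right i p) h) = T[i + p]'h

/-- `per T` is the shortest period of `T`. -/
noncomputable def per {α : Type*} (T : List α) : ℕ := sInf {p | IsPeriod T p}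

/-- `borderF S` is `F(S)`: the length of the shortest border of `S`. -/
noncomputable def borderF {α : Type*} (S : List α) : ℕ := sInf {ℓ | HasBorder S ℓ}

/-- `substr S i j` is the factor `S[i,j]` in 1-based closed-interval indexing. -/
def substr {α : Type*} (S : List α) (i j : ℕ) : List α := (S.drop (i - 1)).take (j + 1 - i)

section Borders

variable {α : Type*} {S : List α} {ℓ : ℕ}

lemma hasBorder_iff_exists :
    HasBorder S ℓ ↔ ∃ u, u ≠ [] ∧ u <+: S ∧ u <:+ S ∧ u.length = ℓ := by
  constructor
  · rintro ⟨hpos, hle, heq⟩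
    have hlen : (S.take ℓ).length = ℓ := List.length_take_of_le hle
    refine ⟨S.take ℓ, List.length_pos_iff.mp (by omega), List.take_prefix ℓ S, ?_, hlen⟩
    exact heq ▸ List.drop_suffix _ S
  · rintro ⟨u, hu, hpre, hsuf, rfl⟩
    exact ⟨List.length_pos_iff.mpr hu, hpre.length_le,
      (List.prefix_iff_eq_take.mp hpre).symm.trans (List.suffix_iff_eq_drop.mp hsuf)⟩

lemma hasBorder_borderF (h : HasBorder S ℓ) : HasBorder S (borderF S) :=
  Nat.sInf_mem (s := {ℓ | HasBorder S ℓ}) ⟨ℓ, h⟩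

lemma borderF_le (h : HasBorder S ℓ) : borderF S ≤ ℓ :=
  Nat.sInf_le h

/-- The two occurrences of a border longer than half of the word overlap, and their overlap is
again a border. -/
lemma HasBorder.overlap (h : HasBorder S ℓ) (hlong : S.length < 2 * ℓ) :
    HasBorder S (2 * ℓ - S.length) := by
  obtain ⟨u, -, ⟨w, rfl⟩, ⟨w', heq⟩, rfl⟩ := hasBorder_iff_exists.mp h
  have hlen : w'.length = w.length := by
    have := congrArg List.length heq
    simp only [List.length_append] at this
    omega
  rw [List.length_append] at hlong ⊢
  obtain ⟨z, hu, hz⟩ : ∃ z, u = w' ++ z ∧ u = z ++ w := by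
    rcases List.append_eq_append_iff.mp heq with h | ⟨z, rfl, -⟩
    · exact h
    · simp only [List.length_append] at hlen hlong
      omega
  have hzlen : u.length = z.length + w.length := by rw [hz, List.length_append]
  refine hasBorder_iff_exists.mpr ⟨z, List.length_pos_iff.mp (by omega), ?_, ?_, by omega⟩
  · exact ⟨w ++ w, by rw [← List.append_assoc, ← hz]⟩
  · exact ⟨w' ++ w', by rw [List.append_assoc, ← hu, heq]⟩

lemma two_mul_borderF_le (h : ¬ Unbordered S) : 2 * borderF S ≤ S.length := by
  simp only [Unbordered, not_forall, not_not] at h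
  obtain ⟨ℓ, hlt, hℓ⟩ := h
  by_contra! hlong
  have := borderF_le hℓ
  have := borderF_le ((hasBorder_borderF hℓ).overlap hlong)
  omega

lemma unbordered_of_length_eq_borderF {u : List α} (hpre : u <+: S) (hsuf : u <:+ S)
    (hu : u.length = borderF S) : Unbordered u := by
  intro ℓ hlt hℓ
  obtain ⟨v, hv, hvpre, hvsuf, rfl⟩ := hasBorder_iff_exists.mp hℓ
  have := borderF_le
    (hasBorder_iff_exists.mpr ⟨v, hv, hvpre.trans hpre, hvsuf.trans hsuf, rfl⟩)
  omega

lemma exists_eq_append_of_not_unbordered (h : ¬ Unbordered S) :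
    ∃ u v, u ≠ [] ∧ Unbordered u ∧ S = u ++ v ++ u := by
  have hhalf := two_mul_borderF_le h
  simp only [Unbordered, not_forall, not_not] at h
  obtain ⟨ℓ, -, hℓ⟩ := h
  obtain ⟨u, hu, hpre, hsuf, hlen⟩ := hasBorder_iff_exists.mp (hasBorder_borderF hℓ)
  have hunb := unbordered_of_length_eq_borderF hpre hsuf hlen
  obtain ⟨w, rfl⟩ := hpre
  rw [← hlen, List.length_append] at hhalf
  obtain ⟨v, rfl⟩ :=
    List.suffix_of_suffix_length_le hsuf (List.suffix_append u w) (by omega)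
  exact ⟨u, v, hu, hunb, (List.append_assoc u v u).symm⟩

lemma not_unbordered_append_take_one (hS : S ≠ []) : ¬ Unbordered (S ++ S.take 1) := by
  have hpos := List.length_pos_iff.mpr hS
  have hlen : (S.take 1).length = 1 := List.length_take_of_le hpos
  refine fun hunb => hunb 1 (by rw [List.length_append]; omega) (hasBorder_iff_exists.mpr ?_)
  exact ⟨S.take 1, List.length_pos_iff.mp (by omega),
    (List.take_prefix 1 S).trans (List.prefix_append S _), List.suffix_append S _, hlen⟩

end Borders

section MaxUnb

variable {α : Type*} {S T : List α}

lemma length_le_maxUnb_of_infix (hT : T ≠ []) (hTS : T <:+: S) (h : Unbordered T) :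
    T.length ≤ maxUnb S := by
  refine le_csSup ⟨S.length, ?_⟩ ⟨T, hT, hTS, h, rfl⟩
  rintro _ ⟨U, -, hUS, -, rfl⟩
  exact hUS.length_le

lemma maxUnb_le_of_infix (h : T <:+: S) : maxUnb T ≤ maxUnb S := by
  refine csSup_le' ?_
  rintro _ ⟨U, hU, hUT, hunb, rfl⟩
  exact length_le_maxUnb_of_infix hU (hUT.trans h) hunb

lemma Unbordered.length_le_maxUnb (h : Unbordered S) : S.length ≤ maxUnb S := by
  rcases eq_or_ne S [] with rfl | hS
  · exact Nat.zero_le _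
  · exact length_le_maxUnb_of_infix hS (List.infix_refl S) h

end MaxUnb

section Words

/-- The words of length `n` over `Γ`, as lists, so that words of different lengths can be
concatenated freely. -/
def words (Γ : Type*) [Fintype Γ] (n : ℕ) : Finset (List Γ) :=
  univ.map ⟨List.ofFn (n := n), List.ofFn_injective⟩

open Classical in
/-- The unbordered words of length `n` over `Γ`. -/
noncomputable def unborderedWords (Γ : Type*) [Fintype Γ] (n : ℕ) : Finset (List Γ) :=
  {S ∈ words Γ n | Unbordered S}

variable {Γ : Type*} [Fintype Γ] {n : ℕ} {S : List Γ}

lemma mem_words : S ∈ words Γ n ↔ S.length = n := by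
  simp only [words, mem_map, mem_univ, true_and, Function.Embedding.coeFn_mk]
  constructor
  · rintro ⟨f, rfl⟩
    exact List.length_ofFn
  · rintro rfl
    exact ⟨S.get, List.ofFn_get S⟩

lemma mem_unborderedWords : S ∈ unborderedWords Γ n ↔ S.length = n ∧ Unbordered S := by
  simp only [unborderedWords, mem_filter, mem_words]

lemma sum_words {M : Type*} [AddCommMonoid M] (f : List Γ → M) :
    ∑ S ∈ words Γ n, f S = ∑ S : Fin n → Γ, f (List.ofFn S) :=
  sum_map _ _ _

lemma card_words (n : ℕ) : #(words Γ n) = Fintype.card Γ ^ n := by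
  rw [words, card_map, card_univ, Fintype.card_fun, Fintype.card_fin]

lemma unborderedWords_subset (n : ℕ) : unborderedWords Γ n ⊆ words Γ n :=
  fun _ hS => mem_words.mpr (mem_unborderedWords.mp hS).1

lemma card_unborderedWords_le (n : ℕ) : #(unborderedWords Γ n) ≤ Fintype.card Γ ^ n :=
  (card_le_card (unborderedWords_subset n)).trans_eq (card_words n)

lemma card_unborderedWords_add_le (k : ℕ) :
    #(unborderedWords Γ (k + 2)) + Fintype.card Γ ^ (k + 1) ≤ Fintype.card Γ ^ (k + 2) := by
  classical
  set B := (words Γ (k + 1)).image fun w => w ++ w.take 1 with hB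
  have hcard : #B = Fintype.card Γ ^ (k + 1) := by
    rw [hB, card_image_of_injOn, card_words]
    intro v hv w hw hvw
    exact List.append_inj_left hvw ((mem_words.mp hv).trans (mem_words.mp hw).symm)
  have hsub : B ⊆ words Γ (k + 2) := by
    refine image_subset_iff.mpr fun w hw => mem_words.mpr ?_
    rw [List.length_append, List.length_take, mem_words.mp hw]
    omega
  have hdisj : Disjoint (unborderedWords Γ (k + 2)) B := by
    refine disjoint_right.mpr fun S hS hunb => ?_
    obtain ⟨w, hw, rfl⟩ := mem_image.mp hS
    have hlen := mem_words.mp hw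
    exact not_unbordered_append_take_one (List.length_pos_iff.mp (by omega))
      (mem_unborderedWords.mp hunb).2
  rw [← hcard, ← card_words (k + 2), ← card_union_of_disjoint hdisj]
  exact card_le_card (union_subset (unborderedWords_subset _) hsub)

open Classical in
lemma sum_not_unbordered_le {f : List Γ → ℝ} (hf : ∀ S, 0 ≤ f S) (n : ℕ) :
    ∑ S ∈ words Γ n with ¬ Unbordered S, f S ≤
      ∑ k ∈ Icc 1 (n / 2), ∑ u ∈ unborderedWords Γ k, ∑ v ∈ words Γ (n - 2 * k),
        f (u ++ v ++ u) := by
  let decomps := (Icc 1 (n / 2)).sigma fun k => unborderedWords Γ k ×ˢ words Γ (n - 2 * k)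
  let glue (p : Σ _ : ℕ, List Γ × List Γ) : List Γ := p.2.1 ++ p.2.2 ++ p.2.1
  have hcover : {S ∈ words Γ n | ¬ Unbordered S} ⊆ decomps.image glue := by
    intro S hS
    obtain ⟨hlen, hbord⟩ := mem_filter.mp hS
    obtain ⟨u, v, hu, hunb, rfl⟩ := exists_eq_append_of_not_unbordered hbord
    have hpos := List.length_pos_iff.mpr hu
    simp only [mem_words, List.length_append] at hlen
    refine mem_image.mpr ⟨⟨u.length, u, v⟩, ?_, rfl⟩
    simp only [decomps, mem_sigma, mem_Icc, mem_product, mem_unborderedWords, mem_words]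
    exact ⟨by omega, ⟨trivial, hunb⟩, by omega⟩
  calc ∑ S ∈ words Γ n with ¬ Unbordered S, f S
      ≤ ∑ S ∈ decomps.image glue, f S :=
        sum_le_sum_of_subset_of_nonneg hcover fun S _ _ => hf S
    _ ≤ ∑ p ∈ decomps, f (glue p) := sum_image_le_of_nonneg fun S _ => hf S
    _ = _ := by simp only [decomps, glue, sum_sigma, sum_product]

end Words

section MomentGeneratingFunction

/-- The random variable `exp (t (|S| - L(S)))`, whose expectation over the words of length `n` is
the moment generating function of `n - L(S)` at `t`. -/
noncomputable def expDeficit {α : Type*} (t : ℝ) (S : List α) : ℝ :=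
  Real.exp (t * (S.length - maxUnb S))

/-- The moment generating function of `n - L(S)` at `t` for a uniformly random word `S` of length
`n` over `Γ`, without its normalising factor `σ ^ (-n)`. -/
noncomputable def mgfSum (Γ : Type*) [Fintype Γ] (t : ℝ) (n : ℕ) : ℝ :=
  ∑ S ∈ words Γ n, expDeficit t S

variable {Γ : Type*} {t : ℝ}

lemma Unbordered.expDeficit_le_one {S : List Γ} (h : Unbordered S) (ht : 0 ≤ t) :
    expDeficit t S ≤ 1 := by
  have hlen : (S.length : ℝ) ≤ maxUnb S := by exact_mod_cast h.length_le_maxUnb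
  exact Real.exp_le_one_iff.mpr (mul_nonpos_of_nonneg_of_nonpos ht (sub_nonpos.mpr hlen))

lemma expDeficit_append_append_le (ht : 0 ≤ t) (u v : List Γ) :
    expDeficit t (u ++ v ++ u) ≤ Real.exp (2 * t) ^ u.length * expDeficit t v := by
  have hmax : (maxUnb v : ℝ) ≤ maxUnb (u ++ v ++ u) := by
    exact_mod_cast maxUnb_le_of_infix (List.infix_append u v u)
  rw [expDeficit, expDeficit, ← Real.exp_nat_mul, ← Real.exp_add, Real.exp_le_exp]
  calc t * ((u ++ v ++ u).length - maxUnb (u ++ v ++ u))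
      ≤ t * ((u ++ v ++ u).length - maxUnb v) := by gcongr
    _ = u.length * (2 * t) + t * (v.length - maxUnb v) := by
        simp only [List.length_append, Nat.cast_add]
        ring

lemma mgfSum_le_card_pow_add_sum [Fintype Γ] (ht : 0 ≤ t) (n : ℕ) :
    mgfSum Γ t n ≤ (Fintype.card Γ : ℝ) ^ n +
      ∑ k ∈ Icc 1 (n / 2),
        #(unborderedWords Γ k) * Real.exp (2 * t) ^ k * mgfSum Γ t (n - 2 * k) := by
  classical
  have hunb : ∑ S ∈ words Γ n with Unbordered S, expDeficit t S ≤ (Fintype.card Γ : ℝ) ^ n := by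
    calc ∑ S ∈ words Γ n with Unbordered S, expDeficit t S
        ≤ #{S ∈ words Γ n | Unbordered S} • (1 : ℝ) :=
          sum_le_card_nsmul _ _ _ fun S hS => (mem_filter.mp hS).2.expDeficit_le_one ht
      _ ≤ (Fintype.card Γ : ℝ) ^ n := by
          rw [nsmul_one, ← Nat.cast_pow, ← card_words]
          exact_mod_cast card_filter_le _ _
  have hbord : ∑ S ∈ words Γ n with ¬ Unbordered S, expDeficit t S ≤
      ∑ k ∈ Icc 1 (n / 2),
        #(unborderedWords Γ k) * Real.exp (2 * t) ^ k * mgfSum Γ t (n - 2 * k) := by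
    refine (sum_not_unbordered_le (fun S => (Real.exp_pos _).le) n).trans ?_
    refine sum_le_sum fun k _ => ?_
    rw [mul_assoc, ← nsmul_eq_mul]
    refine sum_le_card_nsmul _ _ _ fun u hu => ?_
    rw [mgfSum, mul_sum, ← (mem_unborderedWords.mp hu).1]
    exact sum_le_sum fun v _ => expDeficit_append_append_le ht u v
  rw [mgfSum, ← sum_filter_add_sum_filter_not (words Γ n) Unbordered]
  exact add_le_add hunb hbord

end MomentGeneratingFunction

lemma le_pow_div_one_sub_of_renewal {A a : ℕ → ℝ} {s G : ℝ} (hs : 0 < s) (hG : G < 1)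
    (ha : ∀ k, 0 ≤ a k) (hsum : ∀ m, ∑ k ∈ Icc 1 m, a k / s ^ (2 * k) ≤ G)
    (hrec : ∀ n, A n ≤ s ^ n + ∑ k ∈ Icc 1 (n / 2), a k * A (n - 2 * k)) (n : ℕ) :
    A n ≤ s ^ n / (1 - G) := by
  have hG' : 0 < 1 - G := sub_pos.mpr hG
  induction n using Nat.strong_induction_on with
  | _ n ih =>
    have hterm : ∀ k ∈ Icc 1 (n / 2),
        a k * A (n - 2 * k) ≤ s ^ n / (1 - G) * (a k / s ^ (2 * k)) := by
      intro k hk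
      obtain ⟨hk1, hk2⟩ := mem_Icc.mp hk
      calc a k * A (n - 2 * k)
          ≤ a k * (s ^ (n - 2 * k) / (1 - G)) :=
            mul_le_mul_of_nonneg_left (ih _ (by omega)) (ha k)
        _ = s ^ n / (1 - G) * (a k / s ^ (2 * k)) := by
            rw [pow_sub₀ s hs.ne' (by omega)]
            ring
    calc A n
        ≤ s ^ n + ∑ k ∈ Icc 1 (n / 2), a k * A (n - 2 * k) := hrec n
      _ ≤ s ^ n + s ^ n / (1 - G) * G := by
          gcongr
          refine (sum_le_sum hterm).trans ?_
          rw [← mul_sum]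
          gcongr
          exact hsum _
      _ = s ^ n / (1 - G) := by
          field_simp
          ring

section Bounds

variable {Γ : Type*} [Fintype Γ] {σ : ℕ}

lemma card_unborderedWords_one_mul_div_le (hσ : Fintype.card Γ = σ) {x : ℝ} (hx : 0 ≤ x) :
    #(unborderedWords Γ 1) * x ^ 1 / (σ : ℝ) ^ (2 * 1) ≤ x / σ := by
  have hcard : (#(unborderedWords Γ 1) : ℝ) ≤ σ := by
    exact_mod_cast (card_unborderedWords_le 1).trans_eq ((pow_one _).trans hσ)
  calc #(unborderedWords Γ 1) * x ^ 1 / (σ : ℝ) ^ (2 * 1)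
      ≤ σ * x ^ 1 / (σ : ℝ) ^ (2 * 1) := by gcongr
    _ = x / σ := by
        rcases eq_or_ne (σ : ℝ) 0 with h0 | h0
        · simp [h0]
        · rw [mul_one, pow_one, sq, mul_div_mul_left _ _ h0]

lemma card_unborderedWords_add_two_mul_div_le (hσ : Fintype.card Γ = σ) (hσ0 : 0 < σ) {x : ℝ}
    (hx : 0 ≤ x) (k : ℕ) :
    #(unborderedWords Γ (k + 2)) * x ^ (k + 2) / (σ : ℝ) ^ (2 * (k + 2)) ≤
      (1 - 1 / σ) * (x / σ) ^ (k + 2) := by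
  have hcard : (#(unborderedWords Γ (k + 2)) : ℝ) ≤ (σ : ℝ) ^ (k + 2) - (σ : ℝ) ^ (k + 1) := by
    rw [le_sub_iff_add_le, ← hσ]
    exact_mod_cast card_unborderedWords_add_le k
  have : (0 : ℝ) < σ := by exact_mod_cast hσ0
  calc #(unborderedWords Γ (k + 2)) * x ^ (k + 2) / (σ : ℝ) ^ (2 * (k + 2))
      ≤ ((σ : ℝ) ^ (k + 2) - (σ : ℝ) ^ (k + 1)) * x ^ (k + 2) / (σ : ℝ) ^ (2 * (k + 2)) := by
        gcongr
    _ = (1 - 1 / σ) * (x / σ) ^ (k + 2) := by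
        rw [div_pow, two_mul, pow_add (σ : ℝ) (k + 2), pow_succ (σ : ℝ) (k + 1)]
        field_simp

lemma sum_card_unborderedWords_mul_pow_le (hσ : Fintype.card Γ = σ) {x : ℝ} (hx : 0 ≤ x)
    (hxσ : x < σ) (m : ℕ) :
    ∑ k ∈ Icc 1 m, #(unborderedWords Γ k) * x ^ k / (σ : ℝ) ^ (2 * k) ≤
      x * ((σ : ℝ) ^ 2 - x) / ((σ : ℝ) ^ 2 * (σ - x)) := by
  have hσ0 : (0 : ℝ) < σ := hx.trans_lt hxσ
  have hσ1 : (1 : ℝ) ≤ σ := by exact_mod_cast hσ0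
  have hsub : 0 < σ - x := sub_pos.mpr hxσ
  have hrest : ∀ k ∈ Ico 2 (m + 1),
      #(unborderedWords Γ k) * x ^ k / (σ : ℝ) ^ (2 * k) ≤ (1 - 1 / σ) * (x / σ) ^ k := by
    intro k hk
    obtain ⟨j, rfl⟩ := Nat.exists_eq_add_of_le' (mem_Ico.mp hk).1
    exact card_unborderedWords_add_two_mul_div_le hσ (by exact_mod_cast hσ0) hx j
  rw [← Ico_add_one_right_eq_Icc]
  rcases m.eq_zero_or_pos with rfl | hm
  · have hxσ2 : x ≤ (σ : ℝ) ^ 2 := hxσ.le.trans (le_self_pow₀ hσ1 two_ne_zero)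
    rw [zero_add, Ico_self, sum_empty]
    exact div_nonneg (mul_nonneg hx (sub_nonneg.mpr hxσ2)) (by positivity)
  calc ∑ k ∈ Ico 1 (m + 1), #(unborderedWords Γ k) * x ^ k / (σ : ℝ) ^ (2 * k)
      ≤ x / σ + ∑ k ∈ Ico 2 (m + 1), (1 - 1 / σ) * (x / σ) ^ k := by
        rw [sum_eq_sum_Ico_succ_bot (by omega)]
        exact add_le_add (card_unborderedWords_one_mul_div_le hσ hx) (sum_le_sum hrest)
    _ ≤ x / σ + (1 - 1 / σ) * ((x / σ) ^ 2 / (1 - x / σ)) := by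
        rw [← mul_sum]
        gcongr
        · exact sub_nonneg.mpr ((div_le_one hσ0).mpr hσ1)
        · exact geom_sum_Ico_le_of_lt_one (by positivity) ((div_lt_one hσ0).mpr hxσ)
    _ = x * ((σ : ℝ) ^ 2 - x) / ((σ : ℝ) ^ 2 * (σ - x)) := by
        rw [one_sub_div hσ0.ne', one_sub_div hσ0.ne']
        field_simp
        ring

lemma exp_four_mul (t : ℝ) : Real.exp (4 * t) = Real.exp (2 * t) ^ 2 := by
  rw [← Real.exp_nat_mul]
  ring_nf

lemma mgfSum_le (hσ : Fintype.card Γ = σ) {t : ℝ} (ht : 0 ≤ t) (hexp : Real.exp (2 * t) < σ)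
    (hden : 0 < (σ : ℝ) ^ 3 - 2 * (σ : ℝ) ^ 2 * Real.exp (2 * t) + Real.exp (4 * t)) (n : ℕ) :
    mgfSum Γ t n ≤
      ((σ : ℝ) ^ 3 - (σ : ℝ) ^ 2 * Real.exp (2 * t)) /
          ((σ : ℝ) ^ 3 - 2 * (σ : ℝ) ^ 2 * Real.exp (2 * t) + Real.exp (4 * t)) *
        (σ : ℝ) ^ n := by
  have hrec := mgfSum_le_card_pow_add_sum (Γ := Γ) ht
  have hx : 0 < Real.exp (2 * t) := Real.exp_pos _
  rw [hσ] at hrec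
  rw [exp_four_mul] at hden ⊢
  generalize Real.exp (2 * t) = x at *
  have hσ0 : (0 : ℝ) < σ := hx.trans hexp
  have hsub : 0 < σ - x := sub_pos.mpr hexp
  have hG : 1 - x * ((σ : ℝ) ^ 2 - x) / ((σ : ℝ) ^ 2 * (σ - x)) =
      ((σ : ℝ) ^ 3 - 2 * (σ : ℝ) ^ 2 * x + x ^ 2) / ((σ : ℝ) ^ 3 - (σ : ℝ) ^ 2 * x) := by
    rw [one_sub_div (by positivity)]
    ring
  have hG1 : x * ((σ : ℝ) ^ 2 - x) / ((σ : ℝ) ^ 2 * (σ - x)) < 1 := by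
    have : (σ : ℝ) ^ 3 - (σ : ℝ) ^ 2 * x = (σ : ℝ) ^ 2 * (σ - x) := by ring
    rw [← sub_pos, hG, this]
    positivity
  have hmgf := le_pow_div_one_sub_of_renewal hσ0 hG1 (fun k => by positivity)
    (sum_card_unborderedWords_mul_pow_le hσ hx.le hexp) hrec n
  rwa [hG, ← one_div_mul_eq_div, one_div_div] at hmgf

lemma sum_le_sum_exp_sub_card_div {ι : Type*} {t : ℝ} (ht : 0 < t) (s : Finset ι) (f : ι → ℝ) :
    ∑ i ∈ s, f i ≤ (∑ i ∈ s, Real.exp (t * f i) - #s) / t := by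
  rw [le_div_iff₀' ht, mul_sum, card_eq_sum_ones, Nat.cast_sum, ← sum_sub_distrib]
  refine sum_le_sum fun i _ => ?_
  rw [Nat.cast_one, le_sub_iff_add_le]
  exact Real.add_one_le_exp _

lemma denom_pos_of_pow_five_le {s x : ℝ} (hs : 2 ≤ s) (hxs : x ^ 5 ≤ s) :
    0 < s ^ 3 - 2 * s ^ 2 * x + x ^ 2 := by
  -- At `s = 2` the polynomial vanishes for `x = 4 - 2√2 ≈ 1.1716`, while `2 ^ (1/5) ≈ 1.1487`.
  rcases le_or_gt x 1.17 with hsmall | hlarge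
  · calc 0 < s ^ 2 * (s - 2 * 1.17) + 1.17 ^ 2 := by
          have hroot : 0 ≤ (s - 2) * (s ^ 2 - 0.34 * s - 0.68) :=
            mul_nonneg (by linarith) (by nlinarith)
          linarith
      _ ≤ s ^ 3 - 2 * s ^ 2 * x + x ^ 2 := by
          have hmono : 0 ≤ (1.17 - x) * (2 * s ^ 2 - 1.17 - x) :=
            mul_nonneg (by linarith) (by nlinarith)
          linarith
  · have hratio : 1.87 * x ≤ s := by
      have h4 : 1.87 ≤ x ^ 4 := by
        calc (1.87 : ℝ) ≤ 1.17 ^ 4 := by norm_num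
          _ ≤ x ^ 4 := by gcongr
      calc 1.87 * x ≤ x ^ 4 * x := by gcongr
        _ = x ^ 5 := by ring
        _ ≤ s := hxs
    have hfactor : s ^ 3 - 2 * s ^ 2 * x + x ^ 2 = x ^ 2 - s ^ 2 * (2 * x - s) := by ring
    rw [hfactor, sub_pos]
    rcases le_or_gt (2 * x) s with h2 | h2
    · calc s ^ 2 * (2 * x - s) ≤ 0 :=
            mul_nonpos_of_nonneg_of_nonpos (sq_nonneg s) (by linarith)
        _ < x ^ 2 := by positivity
    · have hx2 : x < 1.9 := by
        by_contra! hge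
        have : (1.9 : ℝ) ^ 4 * x ≤ x ^ 4 * x := by gcongr
        nlinarith
      calc s ^ 2 * (2 * x - s) ≤ (2 * x) ^ 2 * (0.13 * x) := by
            gcongr
            linarith
        _ < x ^ 2 := by nlinarith [sq_pos_of_pos (show 0 < x by linarith)]

lemma exp_two_mul_lt {s t : ℝ} (hs : 1 < s) (ht : t ≤ 0.1 * Real.log s) :
    Real.exp (2 * t) < s := by
  rw [← Real.lt_log_iff_exp_lt (by linarith)]
  linarith [Real.log_pos hs]

lemma exp_denom_pos {s t : ℝ} (hs : 2 ≤ s) (ht : t ≤ 0.1 * Real.log s) :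
    0 < s ^ 3 - 2 * s ^ 2 * Real.exp (2 * t) + Real.exp (4 * t) := by
  have hpow : Real.exp (2 * t) ^ 5 ≤ s := by
    rw [← Real.exp_nat_mul, ← Real.le_log_iff_exp_le (by linarith)]
    push_cast
    linarith
  exact exp_four_mul t ▸ denom_pos_of_pow_five_le hs hpow

end Bounds

theorem expected_le_mgf_general {Γ : Type*} [Fintype Γ] {σ : ℕ} (hσ : Fintype.card Γ = σ) (n : ℕ)
    {t : ℝ} (ht : 0 < t) (hexp : Real.exp (2 * t) < σ)
    (hden : 0 < (σ : ℝ) ^ 3 - 2 * (σ : ℝ) ^ 2 * Real.exp (2 * t) + Real.exp (4 * t)) :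
    (∑ S : Fin n → Γ, ((n : ℝ) - maxUnb (List.ofFn S))) / (σ : ℝ) ^ n ≤
      (((σ : ℝ) ^ 3 - (σ : ℝ) ^ 2 * Real.exp (2 * t)) /
          ((σ : ℝ) ^ 3 - 2 * (σ : ℝ) ^ 2 * Real.exp (2 * t) + Real.exp (4 * t)) - 1) / t := by
  have hpos : (0 : ℝ) < (σ : ℝ) ^ n := pow_pos ((Real.exp_pos _).trans hexp) n
  have hmgf := mgfSum_le hσ ht.le hexp hden n
  have hdef : mgfSum Γ t n = ∑ S : Fin n → Γ, Real.exp (t * (n - maxUnb (List.ofFn S))) := by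
    simp only [mgfSum, sum_words, expDeficit, List.length_ofFn]
  have hcard : (#(univ : Finset (Fin n → Γ)) : ℝ) = (σ : ℝ) ^ n := by
    simp [hσ]
  set C := ((σ : ℝ) ^ 3 - (σ : ℝ) ^ 2 * Real.exp (2 * t)) /
    ((σ : ℝ) ^ 3 - 2 * (σ : ℝ) ^ 2 * Real.exp (2 * t) + Real.exp (4 * t))
  rw [div_le_iff₀ hpos]
  calc ∑ S : Fin n → Γ, ((n : ℝ) - maxUnb (List.ofFn S))
      ≤ (mgfSum Γ t n - (σ : ℝ) ^ n) / t := by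
        rw [hdef, ← hcard]
        exact sum_le_sum_exp_sub_card_div ht univ _
    _ ≤ (C * (σ : ℝ) ^ n - (σ : ℝ) ^ n) / t := by gcongr
    _ = (C - 1) / t * (σ : ℝ) ^ n := by ring

/-- for a uniformly random `S ∈ Σⁿ` over an alphabet of size `σ ≥ 2` and every
`0 < t ≤ 0.1 ln σ`, we have `E[n - L(S)] ≤ (C(t) - 1)/t`. -/
theorem expected_le_mgf (σ : ℕ) (hσ : 2 ≤ σ) (Γ : Type) [Fintype Γ]
    (hcard : Fintype.card Γ = σ) (n : ℕ) (t : ℝ)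
    (ht0 : 0 < t) (ht1 : t ≤ 0.1 * Real.log σ) :
    (∑ S : Fin n → Γ, ((n : ℝ) - (maxUnb (List.ofFn S) : ℝ))) / (σ : ℝ) ^ n ≤
      (((σ : ℝ) ^ 3 - (σ : ℝ) ^ 2 * Real.exp (2 * t)) /
          ((σ : ℝ) ^ 3 - 2 * (σ : ℝ) ^ 2 * Real.exp (2 * t) + Real.exp (4 * t)) - 1) / t := by
  have hσ' : (2 : ℝ) ≤ σ := by exact_mod_cast hσ
  exact expected_le_mgf_general hcard n ht0 (exp_two_mul_lt (by linarith) ht1)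
    (exp_denom_pos hσ' ht1)
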